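/- Let K ∪ γ be in normal form with respect to the height function h, and suppose an isotopy of K ∪ γ exchanges the heights of the critical points at two adjacent critical levels t_{i−1} < t_i (no subarc connecting the two critical points lying entirely between the two levels), leaving all other critical levels unchanged. If the critical point at t_{i−1} is a minimum of K ∪ γ and the critical point at t_i is a maximum of K ∪ γ, then this move strictly reduces the width W(K ∪ γ). -/

import Mathlib

/-!
Common geometric definitions for "Levelling an unknotting tunnel"
(Goda–Scharlemann–Thompson).

The 3-sphere is modeled as the unit sphere in ℝ⁴, with height function the
fourth coordinate; level spheres are its level sets.  Knots, arcs, circles and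
disks are embedded images of the standard models.  Regular neighborhoods,
genus-two handlebodies, bridge/thin position, widths, upper/lower disks and
caps are given concrete topological definitions.
-/

open Filter Topology Set

noncomputable section

/-- The ambient 3–sphere `S³ ⊆ ℝ⁴`. -/
abbrev Amb : Type := Metric.sphere (0 : EuclideanSpace ℝ (Fin 4)) 1

/-- The height function on the 3–sphere: the fourth coordinate. -/
def height (p : Amb) : ℝ := (p : EuclideanSpace ℝ (Fin 4)) 3

/-- The level sphere `S(t) = h⁻¹(t)`. -/
def levelSphere (t : ℝ) : Set Amb := {p | height p = t}

/-- A subset is level if it lies in a single level sphere. -/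
def IsLevel (A : Set Amb) : Prop := ∃ t, A ⊆ levelSphere t

/-- The standard circle. -/
abbrev Circ : Type := Metric.sphere (0 : EuclideanSpace ℝ (Fin 2)) 1

/-- The standard 2–sphere. -/
abbrev Sphere2 : Type := Metric.sphere (0 : EuclideanSpace ℝ (Fin 3)) 1

/-- The standard closed 2–disk. -/
abbrev Disk2 : Type := Metric.closedBall (0 : EuclideanSpace ℝ (Fin 2)) 1

/-- The boundary circle of the standard 2–disk. -/
def diskBdry : Set Disk2 := {x | ‖(x : EuclideanSpace ℝ (Fin 2))‖ = 1}

/-- `K` is a knot: an embedded circle in `S³`. -/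
def IsKnot (K : Set Amb) : Prop :=
  ∃ f : C(Circ, Amb), Function.Injective f ∧ Set.range f = K

/-- An embedded arc with endpoints `a` and `b`. -/
def IsArcBetween (α : Set Amb) (a b : Amb) : Prop :=
  ∃ f : C(unitInterval, Amb), Function.Injective f ∧ Set.range f = α ∧ f 0 = a ∧ f 1 = b

/-- An embedded arc on which the height function is (strictly) monotonic. -/
def IsMonotoneArc (α : Set Amb) : Prop :=
  ∃ f : C(unitInterval, Amb), Function.Injective f ∧ Set.range f = α ∧
    ((StrictMono fun s => height (f s)) ∨ StrictAnti fun s => height (f s))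

/-- An embedded circle (simple closed curve). -/
def IsCircleSet (c : Set Amb) : Prop :=
  ∃ f : C(Circ, Amb), Function.Injective f ∧ Set.range f = c

/-- An embedded disk. -/
def IsEmbDisk (F : Set Amb) : Prop :=
  ∃ f : C(Disk2, Amb), Function.Injective f ∧ Set.range f = F

/-- An embedded 2–sphere. -/
def IsEmbSphere (S : Set Amb) : Prop :=
  ∃ f : C(Sphere2, Amb), Function.Injective f ∧ Set.range f = S

/-- An ambient isotopy of the 3–sphere: a continuous family of homeomorphisms
starting at the identity. -/
def IsIsotopy (F : unitInterval → Amb ≃ₜ Amb) : Prop :=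
  Continuous (fun q : unitInterval × Amb => F q.1 q.2) ∧ F 0 = Homeomorph.refl Amb

/-- Two subsets of the 3–sphere are ambiently isotopic. -/
def Isotopic (A B : Set Amb) : Prop :=
  ∃ F, IsIsotopy F ∧ (F 1) '' A = B

/-- `p` is a local maximum of the height function restricted to `A`. -/
def IsLocalMaxPt (A : Set Amb) (p : Amb) : Prop :=
  p ∈ A ∧ ∀ᶠ q in 𝓝[A] p, height q ≤ height p

/-- `p` is a local minimum of the height function restricted to `A`. -/
def IsLocalMinPt (A : Set Amb) (p : Amb) : Prop :=
  p ∈ A ∧ ∀ᶠ q in 𝓝[A] p, height p ≤ height q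

/-- The number of local maxima of the height function on `A`. -/
def numMaxima (A : Set Amb) : ℕ := {p | IsLocalMaxPt A p}.ncard

/-- Bridge position: every local minimum lies below every local maximum. -/
def InBridgePosition (A : Set Amb) : Prop :=
  ∀ p q, IsLocalMinPt A p → IsLocalMaxPt A q → height p < height q

/-- The bridge number of a knot: the minimal number of maxima over all bridge
positions of the knot. -/
def bridgeNumber (K : Set Amb) : ℕ :=
  sInf {n | ∃ K', Isotopic K K' ∧ InBridgePosition K' ∧ numMaxima K' = n}

/-- `K` is in minimal bridge position. -/
def MinimalBridgePosition (K : Set Amb) : Prop :=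
  InBridgePosition K ∧ numMaxima K = bridgeNumber K

/-- The critical heights of `A` (heights of local extrema of the height
function on `A`, together with the heights of the vertex set `V`). -/
def criticalHeights (A V : Set Amb) : Set ℝ :=
  height '' ({p | IsLocalMaxPt A p ∨ IsLocalMinPt A p} ∪ V)

open scoped Classical in
/-- Auxiliary width: `T` is the (finite) set of critical heights and `Vh` the
set of heights receiving weight one (vertex heights); between consecutive
critical heights the points of `A` at the intermediate level are counted,
with weight `2` except on intervals whose top endpoint lies in `Vh`. -/
noncomputable def widthAux (A : Set Amb) (T Vh : Set ℝ) : ℕ :=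
  if hfin : T.Finite then
    (let L := hfin.toFinset.sort (· ≤ ·)
     ((L.zip L.tail).map fun p =>
       (if p.2 ∈ Vh then 1 else 2) * (A ∩ levelSphere ((p.1 + p.2) / 2)).ncard).sum)
  else 0

/-- The Gabai width of a knot. -/
noncomputable def knotWidth (K : Set Amb) : ℕ :=
  widthAux K (criticalHeights K ∅) Set.univ

/-- Thin position of a knot: no isotopic repositioning has smaller width. -/
def ThinPosition (K : Set Amb) : Prop :=
  ∀ K', Isotopic K K' → knotWidth K ≤ knotWidth K'

/-- A planar figure-eight graph in ℝ³. -/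
def figureEight : Set (EuclideanSpace ℝ (Fin 3)) :=
  {p | p 2 = 0 ∧ ((p 0 - 1) ^ 2 + (p 1) ^ 2 = 1 ∨ (p 0 + 1) ^ 2 + (p 1) ^ 2 = 1)}

/-- A standard genus-two handlebody: a thin closed neighborhood of a planar
figure eight in ℝ³. -/
def stdGenus2Handlebody : Set (EuclideanSpace ℝ (Fin 3)) :=
  {p | ∃ q ∈ figureEight, dist p q ≤ 4⁻¹}

/-- A subset of the 3–sphere is a genus-two handlebody if it is homeomorphic to
the standard model. -/
def IsGenus2Handlebody (W : Set Amb) : Prop :=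
  Nonempty (W ≃ₜ stdGenus2Handlebody)

/-- `N` is a regular neighborhood of `X`: a compact set containing `X` in its
interior and admitting a retraction onto `X`. -/
def IsRegularNbhd (N X : Set Amb) : Prop :=
  IsCompact N ∧ X ⊆ interior N ∧
  ∃ r : C(N, Amb), Set.range r = X ∧ ∀ p : N, (p : Amb) ∈ X → r p = p

/-- `γ` is an unknotting tunnel for `K`: an arc meeting `K` exactly in its two
endpoints, such that both a regular neighborhood of `K ∪ γ` and the closure of
its complement are genus-two handlebodies. -/
def IsUnknottingTunnel (K γ : Set Amb) : Prop :=
  (∃ a b, a ≠ b ∧ IsArcBetween γ a b ∧ K ∩ γ = {a, b}) ∧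
  ∃ N, IsRegularNbhd N (K ∪ γ) ∧ IsGenus2Handlebody N ∧ IsGenus2Handlebody (closure Nᶜ)

/-- `K` has tunnel number one. -/
def TunnelNumberOne (K : Set Amb) : Prop :=
  IsKnot K ∧ ∃ γ, IsUnknottingTunnel K γ

/-- `(γa, γc)` is a tunnel for `K`, either in arc form (`γc = ∅`) or in
eyeglass form (arc `γa` together with circle `γc`). -/
def IsTunnelConfig (K γa γc : Set Amb) : Prop :=
  IsKnot K ∧
  ((γc = ∅ ∧ ∃ a b, a ≠ b ∧ IsArcBetween γa a b ∧ K ∩ γa = {a, b}) ∨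
    (∃ v w, v ≠ w ∧ IsArcBetween γa v w ∧ IsCircleSet γc ∧
      γa ∩ γc = {w} ∧ K ∩ (γa ∪ γc) = {v})) ∧
  ∃ N, IsRegularNbhd N (K ∪ γa ∪ γc) ∧ IsGenus2Handlebody N ∧
    IsGenus2Handlebody (closure Nᶜ)

/-- The (trivalent) vertices of the graph `K ∪ γ`. -/
def graphVertices (K γa γc : Set Amb) : Set Amb :=
  (K ∩ (γa ∪ γc)) ∪ (γa ∩ γc)

/-- The width of a graph `A` with vertex set `V`. -/
noncomputable def graphWidth (A V : Set Amb) : ℕ :=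
  widthAux A (criticalHeights A V) (height '' V)

/-- The width `W(K ∪ γ)` of a tunnel configuration. -/
noncomputable def configWidth (K γa γc : Set Amb) : ℕ :=
  graphWidth (K ∪ γa ∪ γc) (graphVertices K γa γc)

/-- `γ'` is obtained from `γ` by slides and isotopies rel `K`: an ambient
isotopy preserving the bridge presentation of `K` throughout, returning `K` to
itself, and carrying a regular neighborhood of `K ∪ γ` to a regular
neighborhood of `K ∪ γ'`. -/
def SlideIsotopic (K γ γ' : Set Amb) : Prop :=
  ∃ F : unitInterval → Amb ≃ₜ Amb, IsIsotopy F ∧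
    (∀ t, InBridgePosition ((F t) '' K) ∧ numMaxima ((F t) '' K) = numMaxima K) ∧
    (F 1) '' K = K ∧
    ∃ N N', IsRegularNbhd N (K ∪ γ) ∧ IsRegularNbhd N' (K ∪ γ') ∧ (F 1) '' N = N'

/-- The critical height `t` of `A` is (the height of) a maximum: the count of
points of `A` on nearby level spheres drops when crossing `t` upwards.  This
includes regular maxima and λ–vertices. -/
def IsMaxHeight (A : Set Amb) (t : ℝ) : Prop :=
  ∀ᶠ ε in 𝓝[>] (0 : ℝ),
    (A ∩ levelSphere (t + ε)).ncard < (A ∩ levelSphere (t - ε)).ncard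

/-- The critical height `t` of `A` is (the height of) a minimum (a regular
minimum or a Y–vertex). -/
def IsMinHeight (A : Set Amb) (t : ℝ) : Prop :=
  ∀ᶠ ε in 𝓝[>] (0 : ℝ),
    (A ∩ levelSphere (t - ε)).ncard < (A ∩ levelSphere (t + ε)).ncard

/-- Normal (Morse) form for a graph `A` with vertex set `V`: finitely many
critical heights, all at distinct levels, with level counts locally constant
away from critical heights, each critical height a maximum or a minimum, and
counts changing by one across a vertex and by two across a regular extremum. -/
structure NormalFormPos (A V : Set Amb) : Prop where
  vertSub : V ⊆ A
  finCrit : (criticalHeights A V).Finite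
  finLevel : ∀ t, t ∉ criticalHeights A V → (A ∩ levelSphere t).Finite
  distinctHeights : Set.InjOn height ({p | IsLocalMaxPt A p ∨ IsLocalMinPt A p} ∪ V)
  locConst : ∀ s s' : ℝ, s ≤ s' → (∀ u ∈ criticalHeights A V, u ∉ Set.Icc s s') →
    (A ∩ levelSphere s).ncard = (A ∩ levelSphere s').ncard
  maxOrMin : ∀ t ∈ criticalHeights A V, IsMaxHeight A t ∨ IsMinHeight A t
  vertexStep : ∀ t ∈ criticalHeights A V, t ∈ height '' V →
    ∀ᶠ ε in 𝓝[>] (0 : ℝ),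
      (A ∩ levelSphere (t + ε)).ncard + 1 = (A ∩ levelSphere (t - ε)).ncard ∨
      (A ∩ levelSphere (t - ε)).ncard + 1 = (A ∩ levelSphere (t + ε)).ncard
  regStep : ∀ t ∈ criticalHeights A V, t ∉ height '' V →
    ∀ᶠ ε in 𝓝[>] (0 : ℝ),
      (A ∩ levelSphere (t + ε)).ncard + 2 = (A ∩ levelSphere (t - ε)).ncard ∨
      (A ∩ levelSphere (t - ε)).ncard + 2 = (A ∩ levelSphere (t + ε)).ncard

/-- Thin position of the pair `(K, γ)` rel `K`: the configuration is in normal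
form and its width cannot be decreased by slides and isotopies of the tunnel
that leave the bridge presentation of `K` unchanged. -/
def ThinPositionRelK (K γa γc : Set Amb) : Prop :=
  IsTunnelConfig K γa γc ∧
  NormalFormPos (K ∪ γa ∪ γc) (graphVertices K γa γc) ∧
  ∀ γa' γc', IsTunnelConfig K γa' γc' →
    SlideIsotopic K (γa ∪ γc) (γa' ∪ γc') →
    NormalFormPos (K ∪ γa' ∪ γc') (graphVertices K γa' γc') →
    configWidth K γa γc ≤ configWidth K γa' γc'

/-- Bridge position for a graph: every minimum occurs below every maximum. -/
def GraphBridgePosition (A V : Set Amb) : Prop :=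
  ∀ t₁ t₂, t₁ ∈ criticalHeights A V → t₂ ∈ criticalHeights A V →
    IsMinHeight A t₁ → IsMaxHeight A t₂ → t₁ < t₂

/-- A good upper disk for the level sphere at height `z`, with respect to the
graph `G = K ∪ γ`: an embedded disk whose boundary is the union of an arc `α`
in the level sphere and an arc `β` on the graph, meeting the graph precisely
in `β`, with a collar of its boundary lying above the level sphere. -/
def GoodUpperDiskAt (G : Set Amb) (z : ℝ) (F α β : Set Amb) (a b : Amb) : Prop :=
  ∃ f : C(Disk2, Amb), Function.Injective f ∧ Set.range f = F ∧
    f '' diskBdry = α ∪ β ∧ a ≠ b ∧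
    IsArcBetween α a b ∧ IsArcBetween β a b ∧ α ∩ β = {a, b} ∧
    α ⊆ levelSphere z ∧ β ⊆ G ∧ F ∩ G = β ∧
    ∀ p ∈ α ∪ β, ∀ᶠ q in 𝓝[F] p, z ≤ height q

/-- A bad upper disk: the arc in the level sphere is a loop, based at a point
of the graph. -/
def BadUpperDiskAt (G : Set Amb) (z : ℝ) (F α : Set Amb) (a : Amb) : Prop :=
  ∃ f : C(Disk2, Amb), Function.Injective f ∧ Set.range f = F ∧
    f '' diskBdry = α ∧ IsCircleSet α ∧ a ∈ α ∧
    α ⊆ levelSphere z ∧ a ∈ G ∧ F ∩ G = {a} ∧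
    ∀ p ∈ α, ∀ᶠ q in 𝓝[F] p, z ≤ height q

/-- A good lower disk. -/
def GoodLowerDiskAt (G : Set Amb) (z : ℝ) (F α β : Set Amb) (a b : Amb) : Prop :=
  ∃ f : C(Disk2, Amb), Function.Injective f ∧ Set.range f = F ∧
    f '' diskBdry = α ∪ β ∧ a ≠ b ∧
    IsArcBetween α a b ∧ IsArcBetween β a b ∧ α ∩ β = {a, b} ∧
    α ⊆ levelSphere z ∧ β ⊆ G ∧ F ∩ G = β ∧
    ∀ p ∈ α ∪ β, ∀ᶠ q in 𝓝[F] p, height q ≤ z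

/-- A bad lower disk. -/
def BadLowerDiskAt (G : Set Amb) (z : ℝ) (F α : Set Amb) (a : Amb) : Prop :=
  ∃ f : C(Disk2, Amb), Function.Injective f ∧ Set.range f = F ∧
    f '' diskBdry = α ∧ IsCircleSet α ∧ a ∈ α ∧
    α ⊆ levelSphere z ∧ a ∈ G ∧ F ∩ G = {a} ∧
    ∀ p ∈ α, ∀ᶠ q in 𝓝[F] p, height q ≤ z

/-- An upper disk (good or bad) for level `z`, with boundary arc/loop `α` in
the level sphere. -/
def UpperDiskAt (G : Set Amb) (z : ℝ) (F α : Set Amb) : Prop :=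
  (∃ β a b, GoodUpperDiskAt G z F α β a b) ∨ ∃ a, BadUpperDiskAt G z F α a

/-- A lower disk (good or bad) for level `z`. -/
def LowerDiskAt (G : Set Amb) (z : ℝ) (F α : Set Amb) : Prop :=
  (∃ β a b, GoodLowerDiskAt G z F α β a b) ∨ ∃ a, BadLowerDiskAt G z F α a

def IsUpperDisk (G : Set Amb) (z : ℝ) (F : Set Amb) : Prop := ∃ α, UpperDiskAt G z F α

def IsLowerDisk (G : Set Amb) (z : ℝ) (F : Set Amb) : Prop := ∃ α, LowerDiskAt G z F α

/-- An upper cap for `K ∪ γ` at the level sphere of height `z`: an embedded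
disk disjoint from the graph, meeting the level sphere exactly in its boundary,
which is essential in the complement of the graph in the level sphere (both
complementary components meet the graph), with interior above the sphere. -/
def IsUpperCap (G : Set Amb) (z : ℝ) (Cp : Set Amb) : Prop :=
  ∃ f : C(Disk2, Amb), Function.Injective f ∧ Set.range f = Cp ∧
    Cp ∩ G = ∅ ∧ Cp ∩ levelSphere z = f '' diskBdry ∧
    (∀ p ∈ Cp \ f '' diskBdry, z < height p) ∧
    ∀ q ∈ levelSphere z \ f '' diskBdry,
      (connectedComponentIn (levelSphere z \ f '' diskBdry) q ∩ G).Nonempty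

/-- A lower cap. -/
def IsLowerCap (G : Set Amb) (z : ℝ) (Cp : Set Amb) : Prop :=
  ∃ f : C(Disk2, Amb), Function.Injective f ∧ Set.range f = Cp ∧
    Cp ∩ G = ∅ ∧ Cp ∩ levelSphere z = f '' diskBdry ∧
    (∀ p ∈ Cp \ f '' diskBdry, height p < z) ∧
    ∀ q ∈ levelSphere z \ f '' diskBdry,
      (connectedComponentIn (levelSphere z \ f '' diskBdry) q ∩ G).Nonempty

/-- `m` is a meridian of the edge `e` of the graph `G`, on the boundary of the
regular neighborhood `N` of `G`: the boundary of a meridian disk in `N`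
meeting `G` in a single point of `e`. -/
def IsMeridianOf (G N e m : Set Amb) : Prop :=
  ∃ (f : C(Disk2, Amb)) (p : Amb), Function.Injective f ∧
    Set.range f ⊆ N ∧ f '' diskBdry = m ∧ m ⊆ frontier N ∧
    Set.range f ∩ G = {p} ∧ p ∈ e

end

/-!
In normal form, the weight that the width gives to the interval just below a critical height `t`,
namely `1` if `t` is the height of a vertex and `2` otherwise, is also the jump of the level count
`s ↦ |S(s) ∩ G|` at `t`.  So the width is the sum over the critical heights of the jump times the
level count just below.  Let `n` be the count just below `t₁`, and let `w₁`, `w₂` be the jumps of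
`G` at its minimum `t₁` and its maximum `t₂`.  These two heights contribute `w₁ n + w₂ (n + w₁)`
before the exchange and `w₂ n + w₁ (n - w₂)` after it, all other contributions being the same, so
the width drops by `2 w₁ w₂`.
-/

open Function (leftLim rightLim)

section Order

variable {α : Type*} [LinearOrder α]

lemma eventually_nhdsLT_disjoint_Ico [TopologicalSpace α] [OrderClosedTopology α] {S : Set α}
    (hS : S.Finite) (t : α) : ∀ᶠ s in 𝓝[<] t, Disjoint S (Ico s t) := by
  have hgt : ∀ᶠ s in 𝓝[<] t, ∀ u ∈ S, u < t → u < s :=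
    (eventually_all_finite hS).mpr fun u _ => eventually_imp_distrib_left.mpr fun hu =>
      eventually_nhdsWithin_of_eventually_nhds (eventually_gt_nhds hu)
  filter_upwards [hgt] with s hs
  exact disjoint_left.mpr fun u hu hmem => (hs u hu hmem.2).not_ge hmem.1

lemma eventually_nhdsGT_disjoint_Ioc [TopologicalSpace α] [OrderClosedTopology α] {S : Set α}
    (hS : S.Finite) (t : α) : ∀ᶠ s in 𝓝[>] t, Disjoint S (Ioc t s) := by
  have hlt : ∀ᶠ s in 𝓝[>] t, ∀ u ∈ S, t < u → s < u :=
    (eventually_all_finite hS).mpr fun u _ => eventually_imp_distrib_left.mpr fun hu =>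
      eventually_nhdsWithin_of_eventually_nhds (eventually_lt_nhds hu)
  filter_upwards [hlt] with s hs
  exact disjoint_left.mpr fun u hu hmem => (hs u hu hmem.1).not_ge hmem.2

lemma lt_and_notMem_Ioo_of_mem_zip_tail {l : List α} (hl : l.SortedLT) {p : α × α}
    (hp : p ∈ l.zip l.tail) : p.1 < p.2 ∧ ∀ u ∈ l, u ∉ Ioo p.1 p.2 := by
  obtain ⟨i, hi, rfl⟩ := List.mem_iff_getElem.mp hp
  simp only [List.getElem_zip, List.getElem_tail]
  refine ⟨hl.getElem_lt_getElem_iff.mpr i.lt_succ_self, fun u hu hmem => ?_⟩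
  obtain ⟨j, hj, rfl⟩ := List.mem_iff_getElem.mp hu
  have hij : i < j := hl.getElem_lt_getElem_iff.mp hmem.1
  have hji : j < i + 1 := hl.getElem_lt_getElem_iff.mp hmem.2
  omega

end Order

lemma sum_map_zip_tail {α M : Type*} [AddMonoid M] {l : List α} {g : α × α → M} {f : α → M}
    (hg : ∀ p ∈ l.zip l.tail, g p = f p.2) (hf : ∀ a ∈ l.head?, f a = 0) :
    ((l.zip l.tail).map g).sum = (l.map f).sum := by
  calc ((l.zip l.tail).map g).sum = (((l.zip l.tail).map Prod.snd).map f).sum := by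
        rw [List.map_map, List.map_congr_left hg]; rfl
    _ = (l.tail.map f).sum := by rw [List.map_snd_zip (by simp)]
    _ = (l.map f).sum := by cases l <;> simp_all

lemma sum_lt_sum_of_add_lt_add {ι M : Type*} [AddCommMonoid M] [PartialOrder M]
    [IsOrderedCancelAddMonoid M] {T : Finset ι} {f g : ι → M} {i j : ι} (hi : i ∈ T) (hj : j ∈ T)
    (hij : i ≠ j) (hle : ∀ k ∈ T, k ≠ i → k ≠ j → f k ≤ g k) (hlt : f i + f j < g i + g j) :
    ∑ k ∈ T, f k < ∑ k ∈ T, g k := by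
  classical
  have hsub : {i, j} ⊆ T := Finset.insert_subset hi (Finset.singleton_subset_iff.mpr hj)
  rw [← Finset.sum_sdiff hsub, ← Finset.sum_sdiff hsub, Finset.sum_pair hij, Finset.sum_pair hij]
  refine add_lt_add_of_le_of_lt (Finset.sum_le_sum fun k hk => ?_) hlt
  simp only [Finset.mem_sdiff, Finset.mem_insert, Finset.mem_singleton, not_or] at hk
  exact hle k hk.1 hk.2.1 hk.2.2

lemma tendsto_const_sub_nhdsGT_zero (t : ℝ) : Tendsto (fun ε => t - ε) (𝓝[>] 0) (𝓝[<] t) :=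
  tendsto_nhdsWithin_iff.mpr
    ⟨((continuous_sub_left t).tendsto' 0 t (sub_zero t)).mono_left nhdsWithin_le_nhds,
      eventually_mem_nhdsWithin.mono fun _ hε => sub_lt_self t hε⟩

lemma tendsto_const_add_nhdsGT_zero (t : ℝ) : Tendsto (fun ε => t + ε) (𝓝[>] 0) (𝓝[>] t) :=
  tendsto_nhdsWithin_iff.mpr
    ⟨((continuous_const_add t).tendsto' 0 t (add_zero t)).mono_left nhdsWithin_le_nhds,
      eventually_mem_nhdsWithin.mono fun _ hε => lt_add_of_pos_right t hε⟩

lemma levelSphere_eq_empty {s : ℝ} (hs : s < -1) : levelSphere s = ∅ := by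
  refine eq_empty_of_forall_notMem fun p (hp : height p = s) => ?_
  have hnorm := PiLp.norm_apply_le (p : EuclideanSpace ℝ (Fin 4)) 3
  rw [norm_eq_of_mem_sphere p] at hnorm
  have hheight : -1 ≤ height p := (abs_le.mp hnorm).1
  linarith

/-- The number `|S(s) ∩ A|` of points of `A` on the level sphere at height `s`.  The counts just
below and just above a critical height `t` are its one-sided limits `leftLim (levelCount A) t` and
`rightLim (levelCount A) t`. -/
noncomputable def levelCount (A : Set Amb) (s : ℝ) : ℕ := (A ∩ levelSphere s).ncard

open scoped Classical in
/-- The coefficient in the width of the level count just below the critical height `t` of a graph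
with vertex set `V`: `1` at a vertex height, `2` at any other critical height. -/
noncomputable def criticalWeight (V : Set Amb) (t : ℝ) : ℕ := if t ∈ height '' V then 1 else 2

lemma criticalWeight_pos (V : Set Amb) (t : ℝ) : 0 < criticalWeight V t := by
  unfold criticalWeight
  split_ifs <;> decide

lemma criticalWeight_congr {V V' : Set Amb} {t t' : ℝ} (h : t ∈ height '' V ↔ t' ∈ height '' V') :
    criticalWeight V t = criticalWeight V' t' := by
  classical
  exact if_congr h rfl rfl

namespace NormalFormPos

variable {A V A' V' : Set Amb} {s t t₁ t₂ : ℝ}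

lemma leftLim_levelCount_eq (h : NormalFormPos A V) (hst : s < t)
    (hs : Disjoint (criticalHeights A V) (Ico s t)) :
    leftLim (levelCount A) t = levelCount A s := by
  refine leftLim_eq_of_tendsto (tendsto_const_nhds.congr' ?_)
  filter_upwards [Ioo_mem_nhdsLT hst] with x hx
  exact h.locConst s x hx.1.le fun u hu hmem =>
    disjoint_left.mp hs hu ⟨hmem.1, hmem.2.trans_lt hx.2⟩

lemma rightLim_levelCount_eq (h : NormalFormPos A V) (hts : t < s)
    (hs : Disjoint (criticalHeights A V) (Ioc t s)) :
    rightLim (levelCount A) t = levelCount A s := by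
  refine rightLim_eq_of_tendsto (tendsto_const_nhds.congr' ?_)
  filter_upwards [Ioo_mem_nhdsGT hts] with x hx
  exact (h.locConst x s hx.2.le fun u hu hmem =>
    disjoint_left.mp hs hu ⟨hx.1.trans_le hmem.1, hmem.2⟩).symm

lemma eventually_levelCount_eq_leftLim (h : NormalFormPos A V) (t : ℝ) :
    ∀ᶠ s in 𝓝[<] t, levelCount A s = leftLim (levelCount A) t := by
  filter_upwards [eventually_nhdsLT_disjoint_Ico h.finCrit t, eventually_mem_nhdsWithin]
    with s hs hst
  exact (h.leftLim_levelCount_eq hst hs).symm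

lemma eventually_levelCount_eq_rightLim (h : NormalFormPos A V) (t : ℝ) :
    ∀ᶠ s in 𝓝[>] t, levelCount A s = rightLim (levelCount A) t := by
  filter_upwards [eventually_nhdsGT_disjoint_Ioc h.finCrit t, eventually_mem_nhdsWithin]
    with s hs hts
  exact (h.rightLim_levelCount_eq hts hs).symm

lemma leftLim_levelCount_congr (h : NormalFormPos A V) (h' : NormalFormPos A' V')
    (heq : levelCount A' =ᶠ[𝓝[<] t] levelCount A) :
    leftLim (levelCount A') t = leftLim (levelCount A) t := by
  obtain ⟨s, hs, hs', hss'⟩ := ((h.eventually_levelCount_eq_leftLim t).and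
    ((h'.eventually_levelCount_eq_leftLim t).and heq)).exists
  rw [← hs, ← hs', hss']

lemma rightLim_levelCount_congr (h : NormalFormPos A V) (h' : NormalFormPos A' V')
    (heq : levelCount A' =ᶠ[𝓝[>] t] levelCount A) :
    rightLim (levelCount A') t = rightLim (levelCount A) t := by
  obtain ⟨s, hs, hs', hss'⟩ := ((h.eventually_levelCount_eq_rightLim t).and
    ((h'.eventually_levelCount_eq_rightLim t).and heq)).exists
  rw [← hs, ← hs', hss']

lemma eventually_levelCount_sub_add (h : NormalFormPos A V) (t : ℝ) :
    ∀ᶠ ε in 𝓝[>] (0 : ℝ), (A ∩ levelSphere (t - ε)).ncard = leftLim (levelCount A) t ∧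
      (A ∩ levelSphere (t + ε)).ncard = rightLim (levelCount A) t :=
  ((tendsto_const_sub_nhdsGT_zero t).eventually (h.eventually_levelCount_eq_leftLim t)).and
    ((tendsto_const_add_nhdsGT_zero t).eventually (h.eventually_levelCount_eq_rightLim t))

lemma dist_leftLim_rightLim (h : NormalFormPos A V) (ht : t ∈ criticalHeights A V) :
    Nat.dist (leftLim (levelCount A) t) (rightLim (levelCount A) t) = criticalWeight V t := by
  unfold criticalWeight Nat.dist
  split_ifs with hv
  · obtain ⟨ε, ⟨hleft, hright⟩, hstep⟩ :=
      ((h.eventually_levelCount_sub_add t).and (h.vertexStep t ht hv)).exists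
    omega
  · obtain ⟨ε, ⟨hleft, hright⟩, hstep⟩ :=
      ((h.eventually_levelCount_sub_add t).and (h.regStep t ht hv)).exists
    omega

lemma rightLim_eq_of_isMinHeight (h : NormalFormPos A V) (ht : t ∈ criticalHeights A V)
    (hmin : IsMinHeight A t) :
    rightLim (levelCount A) t = leftLim (levelCount A) t + criticalWeight V t := by
  obtain ⟨ε, ⟨hleft, hright⟩, hlt⟩ := ((h.eventually_levelCount_sub_add t).and hmin).exists
  have hjump := h.dist_leftLim_rightLim ht
  unfold Nat.dist at hjump
  omega

lemma leftLim_eq_of_isMaxHeight (h : NormalFormPos A V) (ht : t ∈ criticalHeights A V)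
    (hmax : IsMaxHeight A t) :
    leftLim (levelCount A) t = rightLim (levelCount A) t + criticalWeight V t := by
  obtain ⟨ε, ⟨hleft, hright⟩, hlt⟩ := ((h.eventually_levelCount_sub_add t).and hmax).exists
  have hjump := h.dist_leftLim_rightLim ht
  unfold Nat.dist at hjump
  omega

lemma criticalWeight_eq_of_eventuallyEq (h : NormalFormPos A V) (h' : NormalFormPos A' V')
    (ht : t ∈ criticalHeights A V) (ht' : t ∈ criticalHeights A' V')
    (heq : levelCount A' =ᶠ[𝓝 t] levelCount A) :
    criticalWeight V' t = criticalWeight V t := by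
  rw [← h.dist_leftLim_rightLim ht, ← h'.dist_leftLim_rightLim ht',
    h.leftLim_levelCount_congr h' (heq.filter_mono nhdsWithin_le_nhds),
    h.rightLim_levelCount_congr h' (heq.filter_mono nhdsWithin_le_nhds)]

lemma rightLim_eq_leftLim_of_adjacent (h : NormalFormPos A V) (hlt : t₁ < t₂)
    (hadj : Disjoint (criticalHeights A V) (Ioo t₁ t₂)) :
    rightLim (levelCount A) t₁ = leftLim (levelCount A) t₂ := by
  obtain ⟨s, hs₁, hs₂⟩ := exists_between hlt
  rw [h.rightLim_levelCount_eq hs₁ (hadj.mono_right (Ioc_subset_Ioo_right hs₂)),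
    h.leftLim_levelCount_eq hs₂ (hadj.mono_right (Ico_subset_Ioo_left hs₁))]

lemma leftLim_levelCount_eq_zero (h : NormalFormPos A V)
    (ht : ∀ u ∈ criticalHeights A V, t ≤ u) : leftLim (levelCount A) t = 0 := by
  have hdisj : Disjoint (criticalHeights A V) (Ico (min (t - 1) (-2)) t) :=
    disjoint_left.mpr fun u hu hmem => hmem.2.not_ge (ht u hu)
  rw [h.leftLim_levelCount_eq (by simp) hdisj, levelCount,
    levelSphere_eq_empty ((min_le_right _ _).trans_lt (by norm_num)), inter_empty, ncard_empty]

lemma graphWidth_eq_sum (h : NormalFormPos A V) :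
    graphWidth A V =
      ∑ t ∈ h.finCrit.toFinset, criticalWeight V t * leftLim (levelCount A) t := by
  classical
  set L := h.finCrit.toFinset.sort (· ≤ ·) with hL
  have hsorted : L.SortedLT := h.finCrit.toFinset.sortedLT_sort
  have hmem : ∀ {u}, u ∈ L ↔ u ∈ criticalHeights A V := by simp [hL]
  have hmid : ∀ p ∈ L.zip L.tail,
      leftLim (levelCount A) p.2 = levelCount A ((p.1 + p.2) / 2) := by
    intro p hp
    obtain ⟨hlt, hgap⟩ := lt_and_notMem_Ioo_of_mem_zip_tail hsorted hp
    exact h.leftLim_levelCount_eq (add_div_two_lt_right.mpr hlt) <| disjoint_left.mpr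
      fun u hu hmem' => hgap u (hmem.mpr hu)
        ⟨(left_lt_add_div_two.mpr hlt).trans_le hmem'.1, hmem'.2⟩
  have hhead : ∀ a ∈ L.head?, leftLim (levelCount A) a = 0 := by
    intro a ha
    obtain ⟨l, hl⟩ := List.head?_eq_some_iff.mp ha
    exact h.leftLim_levelCount_eq_zero fun u hu => by
      rcases List.mem_cons.mp (hl ▸ hmem.mpr hu) with rfl | hul
      · rfl
      · exact (List.rel_of_pairwise_cons (hl ▸ hsorted.pairwise) hul).le
  calc graphWidth A V
      = ((L.zip L.tail).map fun p =>
          criticalWeight V p.2 * levelCount A ((p.1 + p.2) / 2)).sum := by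
        unfold graphWidth widthAux
        rw [dif_pos h.finCrit]
        rfl
    _ = (L.map fun t => criticalWeight V t * leftLim (levelCount A) t).sum :=
        sum_map_zip_tail (fun p hp => by rw [hmid p hp]) fun a ha => by rw [hhead a ha, mul_zero]
    _ = ∑ t ∈ h.finCrit.toFinset, criticalWeight V t * leftLim (levelCount A) t := by
        rw [← List.sum_toFinset _ hsorted.nodup, Finset.sort_toFinset]

lemma criticalWeight_mul_leftLim_congr (h : NormalFormPos A V) (h' : NormalFormPos A' V')
    (ht : t ∈ criticalHeights A V) (ht' : t ∈ criticalHeights A' V')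
    (heq : levelCount A' =ᶠ[𝓝 t] levelCount A) :
    criticalWeight V' t * leftLim (levelCount A') t =
      criticalWeight V t * leftLim (levelCount A) t := by
  rw [h.criticalWeight_eq_of_eventuallyEq h' ht ht' heq,
    h.leftLim_levelCount_congr h' (heq.filter_mono nhdsWithin_le_nhds)]

lemma criticalWeight_mul_leftLim_add_lt (h : NormalFormPos A V) (h' : NormalFormPos A' V')
    (ht₁ : t₁ ∈ criticalHeights A V) (ht₁' : t₁ ∈ criticalHeights A' V') (hlt : t₁ < t₂)
    (hadj : Disjoint (criticalHeights A V) (Ioo t₁ t₂))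
    (hadj' : Disjoint (criticalHeights A' V') (Ioo t₁ t₂))
    (heq : levelCount A' =ᶠ[𝓝[<] t₁] levelCount A)
    (hw₁ : criticalWeight V' t₁ = criticalWeight V t₂)
    (hw₂ : criticalWeight V' t₂ = criticalWeight V t₁)
    (hmin : IsMinHeight A t₁) (hmax' : IsMaxHeight A' t₁) :
    criticalWeight V' t₁ * leftLim (levelCount A') t₁ +
        criticalWeight V' t₂ * leftLim (levelCount A') t₂ <
      criticalWeight V t₁ * leftLim (levelCount A) t₁ +
        criticalWeight V t₂ * leftLim (levelCount A) t₂ := by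
  have hbelow : leftLim (levelCount A') t₁ = leftLim (levelCount A) t₁ :=
    h.leftLim_levelCount_congr h' heq
  have hup : leftLim (levelCount A) t₂ = leftLim (levelCount A) t₁ + criticalWeight V t₁ := by
    rw [← h.rightLim_eq_leftLim_of_adjacent hlt hadj, h.rightLim_eq_of_isMinHeight ht₁ hmin]
  have hdown : leftLim (levelCount A) t₁ = leftLim (levelCount A') t₂ + criticalWeight V t₂ := by
    rw [← h'.rightLim_eq_leftLim_of_adjacent hlt hadj', ← hbelow, ← hw₁,
      h'.leftLim_eq_of_isMaxHeight ht₁' hmax']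
  rw [hw₁, hw₂, hup, hbelow, hdown]
  nlinarith [mul_pos (criticalWeight_pos V t₁) (criticalWeight_pos V t₂)]

end NormalFormPos

theorem exchange_min_max_reduces_width_general {G V G' V' : Set Amb} {t₁ t₂ : ℝ}
    (hNF : NormalFormPos G V) (hNF' : NormalFormPos G' V')
    (ht₁ : t₁ ∈ criticalHeights G V) (ht₂ : t₂ ∈ criticalHeights G V) (hlt : t₁ < t₂)
    (hadj : Disjoint (criticalHeights G V) (Ioo t₁ t₂))
    (hT : criticalHeights G' V' = criticalHeights G V)
    (hout : ∀ s ∉ Icc t₁ t₂, levelCount G' s = levelCount G s)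
    (hswap₁ : t₁ ∈ height '' V' ↔ t₂ ∈ height '' V)
    (hswap₂ : t₂ ∈ height '' V' ↔ t₁ ∈ height '' V)
    (hmin : IsMinHeight G t₁) (hmax' : IsMaxHeight G' t₁) :
    graphWidth G' V' < graphWidth G V := by
  have hbelow : levelCount G' =ᶠ[𝓝[<] t₁] levelCount G :=
    eventually_mem_nhdsWithin.mono fun s hs => hout s fun hmem => hmem.1.not_gt hs
  have haway : ∀ t ∉ Icc t₁ t₂, levelCount G' =ᶠ[𝓝 t] levelCount G := fun t ht =>
    mem_of_superset (isClosed_Icc.isOpen_compl.mem_nhds ht) hout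
  have hfin : hNF'.finCrit.toFinset = hNF.finCrit.toFinset := Set.Finite.toFinset_inj.mpr hT
  rw [hNF.graphWidth_eq_sum, hNF'.graphWidth_eq_sum, hfin]
  refine sum_lt_sum_of_add_lt_add (hNF.finCrit.mem_toFinset.mpr ht₁)
    (hNF.finCrit.mem_toFinset.mpr ht₂) hlt.ne (fun t ht hne₁ hne₂ => ?_)
    (hNF.criticalWeight_mul_leftLim_add_lt hNF' ht₁ (hT ▸ ht₁) hlt hadj (hT ▸ hadj) hbelow
      (criticalWeight_congr hswap₁) (criticalWeight_congr hswap₂) hmin hmax')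
  rw [hNF.finCrit.mem_toFinset] at ht
  exact (hNF.criticalWeight_mul_leftLim_congr hNF' ht (hT ▸ ht) <| haway t fun hmem =>
    disjoint_left.mp hadj ht ⟨hmem.1.lt_of_ne' hne₁, hmem.2.lt_of_ne hne₂⟩).le

/-- Section 3, Claim 2.  Suppose `K ∪ γ` (the graph `G` with
vertex set `V`) is in normal form, and an isotopy exchanges the heights of the
critical points at the adjacent critical levels `t₁ < t₂`, leaving all other
critical levels (and the level counts away from the exchanged levels)
unchanged, producing the normal form graph `G'` with vertex set `V'`.  If the
critical point at `t₁` is a minimum and the critical point at `t₂` is a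
maximum, the move strictly reduces the width `W(K ∪ γ)`. -/
theorem exchange_min_max_reduces_width
    (G V G' V' : Set Amb) (t₁ t₂ : ℝ)
    (hNF : NormalFormPos G V) (hNF' : NormalFormPos G' V')
    (hiso : ∃ F, IsIsotopy F ∧ (F 1) '' G = G' ∧ (F 1) '' V = V')
    (ht₁ : t₁ ∈ criticalHeights G V) (ht₂ : t₂ ∈ criticalHeights G V)
    (hlt : t₁ < t₂)
    (hadj : ∀ u ∈ criticalHeights G V, ¬(t₁ < u ∧ u < t₂))
    (hT : criticalHeights G' V' = criticalHeights G V)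
    (hout : ∀ s : ℝ, s ∉ Set.Icc t₁ t₂ →
      (G' ∩ levelSphere s).ncard = (G ∩ levelSphere s).ncard)
    (hswapv₁ : t₁ ∈ height '' V' ↔ t₂ ∈ height '' V)
    (hswapv₂ : t₂ ∈ height '' V' ↔ t₁ ∈ height '' V)
    (hswapm₁ : IsMaxHeight G' t₁ ↔ IsMaxHeight G t₂)
    (hswapm₂ : IsMaxHeight G' t₂ ↔ IsMaxHeight G t₁)
    (hswapn₁ : IsMinHeight G' t₁ ↔ IsMinHeight G t₂)
    (hswapn₂ : IsMinHeight G' t₂ ↔ IsMinHeight G t₁)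
    (hmin : IsMinHeight G t₁) (hmax : IsMaxHeight G t₂) :
    graphWidth G' V' < graphWidth G V :=
  exchange_min_max_reduces_width_general hNF hNF' ht₁ ht₂ hlt (disjoint_left.mpr hadj) hT hout
    hswapv₁ hswapv₂ hmin (hswapm₁.mpr hmax)
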